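/- If p_v is the multivariate Rademacher distribution (uniform on {±1}^D), then under the assumptions below, Var_{p_d, p_v}[∇_θ f(θ*; x, v_1^M)] = Σ_{i,j} V_{ij} + (2/M) Σ_{i≠j} W_{ij}. (Lemma B.6 of the paper, Rademacher case.) -/

import Mathlib

open MeasureTheory

noncomputable section

/-- `∂ᵢ log p_m(x;θ)`, the `i`-th partial derivative in `x` of the log-density. -/
def dLx {D K : ℕ} (pm : EuclideanSpace ℝ (Fin K) → (Fin D → ℝ) → ℝ)
    (θ : EuclideanSpace ℝ (Fin K)) (x : Fin D → ℝ) (i : Fin D) : ℝ :=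
  fderiv ℝ (fun y => Real.log (pm θ y)) x (Pi.single i 1)

/-- `∂ᵢ∂ⱼ log p_m(x;θ)`, a second partial derivative in `x` of the log-density. -/
def d2Lx {D K : ℕ} (pm : EuclideanSpace ℝ (Fin K) → (Fin D → ℝ) → ℝ)
    (θ : EuclideanSpace ℝ (Fin K)) (x : Fin D → ℝ) (i j : Fin D) : ℝ :=
  fderiv ℝ (fun y => dLx pm θ y j) x (Pi.single i 1)

/-- `u_{ij}(x) = ∇_θ ∂ᵢ∂ⱼ l_m + ½ ∇_θ(∂ᵢ l_m ∂ⱼ l_m)` evaluated at `θ = θ*`. -/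
def uVec {D K : ℕ} (pm : EuclideanSpace ℝ (Fin K) → (Fin D → ℝ) → ℝ)
    (θstar : EuclideanSpace ℝ (Fin K)) (i j : Fin D) (x : Fin D → ℝ) :
    EuclideanSpace ℝ (Fin K) :=
  gradient (fun θ => d2Lx pm θ x i j) θstar
    + (1/2 : ℝ) • gradient (fun θ => dLx pm θ x i * dLx pm θ x j) θstar

/-- `f(θ; x, v_1^M) = (1/M) Σⱼ [vⱼᵀ ∇ₓ s_m(x;θ) vⱼ + ½ (vⱼᵀ s_m(x;θ))²]`. -/
def avgF {D K M : ℕ} (pm : EuclideanSpace ℝ (Fin K) → (Fin D → ℝ) → ℝ)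
    (θ : EuclideanSpace ℝ (Fin K)) (x : Fin D → ℝ) (vs : Fin M → Fin D → ℝ) : ℝ :=
  (1 / (M : ℝ)) * ∑ k : Fin M,
    ((∑ i, ∑ j, vs k i * vs k j * d2Lx pm θ x i j)
      + (1/2) * (∑ i, vs k i * dLx pm θ x i) ^ 2)

/-- `∇_θ f(θ*; x, v_1^M)`. -/
def gradF {D K M : ℕ} (pm : EuclideanSpace ℝ (Fin K) → (Fin D → ℝ) → ℝ)
    (θstar : EuclideanSpace ℝ (Fin K)) (x : Fin D → ℝ) (vs : Fin M → Fin D → ℝ) :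
    EuclideanSpace ℝ (Fin K) :=
  gradient (fun θ => avgF pm θ x vs) θstar

section Helpers

lemma aux_contDiff {E F : Type*} [NormedAddCommGroup E] [NormedSpace ℝ E]
    [NormedAddCommGroup F] [NormedSpace ℝ F] (G : E × F → ℝ)
    (hG : ContDiff ℝ (⊤ : ℕ∞) G) (w : F) :
    ContDiff ℝ (⊤ : ℕ∞) (fun p : E × F => fderiv ℝ (fun y => G (p.1, y)) p.2 w) := by
  have h : ContDiff ℝ (⊤ : ℕ∞) (fun p : E × F => fderiv ℝ (fun y => G (p.1, y)) p.2) := by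
    refine ContDiff.fderiv (n := (⊤ : ℕ∞)) (f := fun (p : E × F) y => G (p.1, y)) (g := fun p => p.2) ?_ contDiff_snd (le_refl _)
    exact hG.comp ((contDiff_fst.comp contDiff_fst).prodMk contDiff_snd)
  exact h.clm_apply contDiff_const

lemma aux_dLx {D K : ℕ} (pm : EuclideanSpace ℝ (Fin K) → (Fin D → ℝ) → ℝ)
    (hsmooth : ContDiff ℝ (⊤ : ℕ∞)
      (fun p : EuclideanSpace ℝ (Fin K) × (Fin D → ℝ) => Real.log (pm p.1 p.2))) (i : Fin D) :
    ContDiff ℝ (⊤ : ℕ∞)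
      (fun p : EuclideanSpace ℝ (Fin K) × (Fin D → ℝ) => dLx pm p.1 p.2 i) :=
  aux_contDiff _ hsmooth (Pi.single i 1)

lemma aux_d2Lx {D K : ℕ} (pm : EuclideanSpace ℝ (Fin K) → (Fin D → ℝ) → ℝ)
    (hsmooth : ContDiff ℝ (⊤ : ℕ∞)
      (fun p : EuclideanSpace ℝ (Fin K) × (Fin D → ℝ) => Real.log (pm p.1 p.2))) (i j : Fin D) :
    ContDiff ℝ (⊤ : ℕ∞)
      (fun p : EuclideanSpace ℝ (Fin K) × (Fin D → ℝ) => d2Lx pm p.1 p.2 i j) :=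
  aux_contDiff _ (aux_dLx pm hsmooth j) (Pi.single i 1)

lemma aux_symm {D K : ℕ} (pm : EuclideanSpace ℝ (Fin K) → (Fin D → ℝ) → ℝ)
    (hsmooth : ContDiff ℝ (⊤ : ℕ∞)
      (fun p : EuclideanSpace ℝ (Fin K) × (Fin D → ℝ) => Real.log (pm p.1 p.2)))
    (θ : EuclideanSpace ℝ (Fin K)) (x : Fin D → ℝ) (i j : Fin D) :
    d2Lx pm θ x i j = d2Lx pm θ x j i := by
  have hφ : ContDiff ℝ (⊤ : ℕ∞) (fun y : Fin D → ℝ => Real.log (pm θ y)) :=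
    hsmooth.comp (contDiff_const.prodMk contDiff_id)
  have h2 : (2 : WithTop ℕ∞) ≤ ((⊤ : ℕ∞) : WithTop ℕ∞) :=
    WithTop.coe_le_coe.2 (le_top (a := (2 : ℕ∞)))
  have hd : DifferentiableAt ℝ (fderiv ℝ (fun y : Fin D → ℝ => Real.log (pm θ y))) x :=
    ((hφ.fderiv_right (m := 1) (by rw [one_add_one_eq_two]; exact h2)).differentiable (by norm_num)) x
  have hs : IsSymmSndFDerivAt ℝ (fun y : Fin D → ℝ => Real.log (pm θ y)) x := by
    refine hφ.contDiffAt.isSymmSndFDerivAt ?_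
    simpa using h2
  have key : ∀ i j, d2Lx pm θ x i j
      = fderiv ℝ (fderiv ℝ (fun y : Fin D → ℝ => Real.log (pm θ y))) x
        (Pi.single i 1) (Pi.single j 1) := by
    intro i j
    unfold d2Lx dLx
    rw [fderiv_clm_apply hd (differentiableAt_const _)]
    simp
  rw [key, key]
  exact hs.eq _ _

lemma aux_gradient {K : ℕ} (f : EuclideanSpace ℝ (Fin K) → ℝ) (θ : EuclideanSpace ℝ (Fin K))
    (a : Fin K) : gradient f θ a = fderiv ℝ f θ (EuclideanSpace.single a 1) := by
  have h : inner ℝ (gradient f θ) (EuclideanSpace.single a (1:ℝ))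
      = fderiv ℝ f θ (EuclideanSpace.single a 1) := by
    unfold gradient
    rw [InnerProductSpace.toDual_symm_apply]
  rw [← h, EuclideanSpace.inner_single_right]
  simp

lemma aux_uVec {D K : ℕ} (pm : EuclideanSpace ℝ (Fin K) → (Fin D → ℝ) → ℝ)
    (hsmooth : ContDiff ℝ (⊤ : ℕ∞)
      (fun p : EuclideanSpace ℝ (Fin K) × (Fin D → ℝ) => Real.log (pm p.1 p.2)))
    (θ : EuclideanSpace ℝ (Fin K)) (x : Fin D → ℝ) (i j : Fin D) :
    HasFDerivAt (fun θ => d2Lx pm θ x i j + (1/2 : ℝ) * (dLx pm θ x i * dLx pm θ x j))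
      (fderiv ℝ (fun θ => d2Lx pm θ x i j) θ
        + (1/2 : ℝ) • fderiv ℝ (fun θ => dLx pm θ x i * dLx pm θ x j) θ) θ := by
  have hp : ContDiff ℝ (⊤ : ℕ∞) (fun θ : EuclideanSpace ℝ (Fin K) => (θ, x)) :=
    contDiff_id.prodMk contDiff_const
  have h1 : ∀ i, ContDiff ℝ (⊤ : ℕ∞) (fun θ => dLx pm θ x i) :=
    fun i => (aux_dLx pm hsmooth i).comp hp
  have h2 : ContDiff ℝ (⊤ : ℕ∞) (fun θ => d2Lx pm θ x i j) :=
    (aux_d2Lx pm hsmooth i j).comp hp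
  have h3 : DifferentiableAt ℝ (fun θ => dLx pm θ x i * dLx pm θ x j) θ :=
    (((h1 i).mul (h1 j)).differentiable (by simp)) θ
  exact ((h2.differentiable (by simp)) θ).hasFDerivAt.add (h3.hasFDerivAt.const_mul (1/2 : ℝ))

lemma aux_gradF {D K M : ℕ} (pm : EuclideanSpace ℝ (Fin K) → (Fin D → ℝ) → ℝ)
    (hsmooth : ContDiff ℝ (⊤ : ℕ∞)
      (fun p : EuclideanSpace ℝ (Fin K) × (Fin D → ℝ) => Real.log (pm p.1 p.2)))
    (θ : EuclideanSpace ℝ (Fin K)) (x : Fin D → ℝ) (vs : Fin M → Fin D → ℝ) (a : Fin K) :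
    gradF pm θ x vs a = (1 / (M : ℝ)) * ∑ k : Fin M, ∑ i, ∑ j,
      vs k i * vs k j * uVec pm θ i j x a := by
  have e : (fun θ => avgF pm θ x vs) = fun θ => (1 / (M : ℝ)) * ∑ k : Fin M, ∑ i, ∑ j,
      vs k i * vs k j * (d2Lx pm θ x i j + (1/2 : ℝ) * (dLx pm θ x i * dLx pm θ x j)) := by
    funext θ
    unfold avgF
    congr 1
    refine Finset.sum_congr rfl fun k _ => ?_
    rw [sq, Finset.sum_mul_sum, Finset.mul_sum, ← Finset.sum_add_distrib]
    refine Finset.sum_congr rfl fun i _ => ?_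
    rw [Finset.mul_sum, ← Finset.sum_add_distrib]
    refine Finset.sum_congr rfl fun j _ => ?_
    ring
  have hd := (HasFDerivAt.fun_sum (u := Finset.univ) fun (k : Fin M) _ =>
    HasFDerivAt.fun_sum (u := Finset.univ) fun (i : Fin D) _ =>
    HasFDerivAt.fun_sum (u := Finset.univ) fun (j : Fin D) _ =>
      (aux_uVec pm hsmooth θ x i j).const_mul (vs k i * vs k j)).const_mul (1 / (M : ℝ))
  unfold gradF
  rw [aux_gradient, e, hd.fderiv]
  simp [uVec, aux_gradient, mul_add]

lemma aux_uVec_symm {D K : ℕ} (pm : EuclideanSpace ℝ (Fin K) → (Fin D → ℝ) → ℝ)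
    (hsmooth : ContDiff ℝ (⊤ : ℕ∞)
      (fun p : EuclideanSpace ℝ (Fin K) × (Fin D → ℝ) => Real.log (pm p.1 p.2)))
    (θ : EuclideanSpace ℝ (Fin K)) (x : Fin D → ℝ) (i j : Fin D) :
    uVec pm θ i j x = uVec pm θ j i x := by
  unfold uVec
  simp_rw [aux_symm pm hsmooth _ x i j, mul_comm (dLx pm _ x i) (dLx pm _ x j)]

/-- The sign vector of a Boolean vector. -/
def sgnv {D : ℕ} (s : Fin D → Bool) : Fin D → ℝ := fun i => if s i then (1 : ℝ) else -1

/-- The Rademacher measure. -/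
def radm (D : ℕ) : Measure (Fin D → ℝ) :=
  Measure.map sgnv (PMF.uniformOfFintype (Fin D → Bool)).toMeasure

lemma radm_integrable {D : ℕ} (g : (Fin D → ℝ) → ℝ) (hg : Measurable g) :
    Integrable g (radm D) := by
  unfold radm
  rw [integrable_map_measure hg.aestronglyMeasurable (measurable_of_finite _).aemeasurable]
  exact Integrable.of_finite

lemma radm_integral {D : ℕ} (g : (Fin D → ℝ) → ℝ) (hg : Measurable g) :
    ∫ v, g v ∂(radm D) = ((2 : ℝ) ^ D)⁻¹ * ∑ s : Fin D → Bool, g (sgnv s) := by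
  unfold radm
  rw [integral_map (measurable_of_finite _).aemeasurable hg.aestronglyMeasurable,
    PMF.integral_eq_sum]
  simp [Finset.mul_sum]

lemma radm_zero {D : ℕ} (g : (Fin D → ℝ) → ℝ) (hg : Measurable g) (t : Fin D)
    (h : ∀ v, g (Function.update v t (- v t)) = - g v) :
    ∫ v, g v ∂(radm D) = 0 := by
  rw [radm_integral g hg]
  have hi : Function.Involutive (fun s : Fin D → Bool => Function.update s t (! s t)) := by
    intro s; ext r; by_cases hr : r = t
    · subst hr; simp
    · simp [hr]
  have h1 := Equiv.sum_comp hi.toPerm (fun s => g (sgnv s))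
  have h2 : ∀ s : Fin D → Bool, sgnv ((hi.toPerm : (Fin D → Bool) ≃ (Fin D → Bool)) s) = Function.update (sgnv s) t (- sgnv s t) := by
    intro s; ext r
    by_cases hr : r = t
    · subst hr; by_cases hs : s r <;> simp [sgnv, Function.Involutive.toPerm, hs]
    · simp [sgnv, Function.Involutive.toPerm, hr]
  simp only [h2, h, Finset.sum_neg_distrib] at h1
  have : ∑ s : Fin D → Bool, g (sgnv s) = 0 := by linarith
  simp [this]

lemma radm_one {D : ℕ} (g : (Fin D → ℝ) → ℝ) (hg : Measurable g)
    (h : ∀ s, g (sgnv s) = 1) :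
    ∫ v, g v ∂(radm D) = 1 := by
  rw [radm_integral g hg]
  simp [h]

lemma sgnv_sq {D : ℕ} (s : Fin D → Bool) (i : Fin D) : sgnv s i * sgnv s i = 1 := by
  by_cases hs : s i <;> simp [sgnv, hs]

lemma radm_m2 {D : ℕ} (i j : Fin D) :
    ∫ v, v i * v j ∂(radm D) = if i = j then 1 else 0 := by
  split_ifs with h
  · subst h
    exact radm_one (fun v => v i * v i) (by fun_prop) (fun s => sgnv_sq s i)
  · refine radm_zero (fun v => v i * v j) (by fun_prop) i fun v => ?_
    simp [Ne.symm h]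

lemma radm_m4 {D : ℕ} (i j p q : Fin D) :
    ∫ v, (v i * v j) * (v p * v q) ∂(radm D) =
      (if i = j then if p = q then 1 else 0 else 0)
      + (if i ≠ j then (if i = p then if j = q then 1 else 0 else 0)
          + (if i = q then if j = p then 1 else 0 else 0) else 0) := by
  have hm : Measurable (fun v : Fin D → ℝ => (v i * v j) * (v p * v q)) := by fun_prop
  by_cases hij : i = j
  · subst hij
    by_cases hpq : p = q
    · subst hpq
      rw [radm_one _ hm (fun s => by simp [sgnv_sq])]
      simp
    · by_cases hip : p = i
      · rw [radm_zero _ hm q (fun v => by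
          have : i ≠ q := by rintro rfl; exact hpq hip
          simp [this, hpq])]
        simp [hpq]
      · rw [radm_zero _ hm p (fun v => by simp [Ne.symm hip, Ne.symm hpq])]
        simp [hpq]
  · by_cases hip : i = p
    · subst hip
      by_cases hjq : j = q
      · subst hjq
        rw [radm_one _ hm (fun s => by
          have h1 := sgnv_sq s i
          have h2 := sgnv_sq s j
          calc _ = (sgnv s i * sgnv s i) * (sgnv s j * sgnv s j) := by ring
            _ = 1 := by rw [h1, h2, one_mul])]
        simp [hij]
      · rw [radm_zero _ hm j (fun v => by simp [hij, Ne.symm hjq])]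
        simp [hij, hjq, Ne.symm hij]
    · by_cases hiq : i = q
      · subst hiq
        by_cases hjp : j = p
        · subst hjp
          rw [radm_one _ hm (fun s => by
            have h1 := sgnv_sq s i
            have h2 := sgnv_sq s j
            calc _ = (sgnv s i * sgnv s i) * (sgnv s j * sgnv s j) := by ring
              _ = 1 := by rw [h1, h2, one_mul])]
          simp [hij]
        · rw [radm_zero _ hm j (fun v => by simp [hij, Ne.symm hjp])]
          simp [hij, hjp, hip]
      · rw [radm_zero _ hm i (fun v => by simp [Ne.symm hij, Ne.symm hip, Ne.symm hiq])]
        simp [hij, hip, hiq]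

lemma pi_integral_eval {D M : ℕ} [IsProbabilityMeasure (radm D)] (k : Fin M)
    (g : (Fin D → ℝ) → ℝ) (hg : Measurable g) :
    Integrable (fun vs : Fin M → Fin D → ℝ => g (vs k)) (Measure.pi fun _ : Fin M => radm D) ∧
    ∫ vs : Fin M → Fin D → ℝ, g (vs k) ∂(Measure.pi fun _ : Fin M => radm D)
      = ∫ v, g v ∂(radm D) := by
  have hp := measurePreserving_eval (fun _ : Fin M => radm D) k
  refine ⟨hp.integrable_comp_of_integrable (radm_integrable g hg), ?_⟩
  conv_rhs => rw [← hp.map_eq]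
  rw [integral_map hp.measurable.aemeasurable hg.aestronglyMeasurable]

lemma pi_integral_two {D M : ℕ} [IsProbabilityMeasure (radm D)] (k l : Fin M) (hkl : k ≠ l)
    (g h : (Fin D → ℝ) → ℝ) (hg : Measurable g) (hh : Measurable h) :
    Integrable (fun vs : Fin M → Fin D → ℝ => g (vs k) * h (vs l))
      (Measure.pi fun _ : Fin M => radm D) ∧
    ∫ vs : Fin M → Fin D → ℝ, g (vs k) * h (vs l) ∂(Measure.pi fun _ : Fin M => radm D)
      = (∫ v, g v ∂(radm D)) * ∫ v, h v ∂(radm D) := by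
  have hind : ProbabilityTheory.IndepFun (fun vs : Fin M → Fin D → ℝ => g (vs k))
      (fun vs : Fin M → Fin D → ℝ => h (vs l)) (Measure.pi fun _ : Fin M => radm D) := by
    have h0 := ProbabilityTheory.iIndepFun_pi (μ := fun _ : Fin M => radm D)
      (X := fun _ (v : Fin D → ℝ) => v) (fun _ => aemeasurable_id)
    exact (h0.indepFun hkl).comp hg hh
  obtain ⟨i1, e1⟩ := pi_integral_eval (M := M) k g hg
  obtain ⟨i2, e2⟩ := pi_integral_eval (M := M) l h hh
  refine ⟨hind.integrable_mul i1 i2, ?_⟩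
  rw [← e1, ← e2]
  exact hind.integral_fun_mul_eq_mul_integral i1.aestronglyMeasurable i2.aestronglyMeasurable

lemma pi_mom {D M : ℕ} [IsProbabilityMeasure (radm D)] (k l : Fin M) (i j p q : Fin D) :
    Integrable (fun vs : Fin M → Fin D → ℝ => (vs k i * vs k j) * (vs l p * vs l q))
      (Measure.pi fun _ : Fin M => radm D) ∧
    ∫ vs : Fin M → Fin D → ℝ, (vs k i * vs k j) * (vs l p * vs l q)
        ∂(Measure.pi fun _ : Fin M => radm D)
      = (if i = j then if p = q then 1 else 0 else 0)
      + if k = l then (if i ≠ j then (if i = p then if j = q then 1 else 0 else 0)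
          + (if i = q then if j = p then 1 else 0 else 0) else 0) else 0 := by
  by_cases hkl : k = l
  · subst hkl
    obtain ⟨h1, h2⟩ := pi_integral_eval (M := M) k
      (fun v : Fin D → ℝ => (v i * v j) * (v p * v q)) (by fun_prop)
    refine ⟨h1, ?_⟩
    rw [h2, radm_m4]
    simp
  · obtain ⟨h1, h2⟩ := pi_integral_two (M := M) k l hkl
      (fun v : Fin D → ℝ => v i * v j) (fun v : Fin D → ℝ => v p * v q)
      (by fun_prop) (by fun_prop)
    refine ⟨h1, ?_⟩
    rw [h2, radm_m2, radm_m2]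
    by_cases hij : i = j <;> simp [hkl, hij]

lemma aux_alg {D M : ℕ} (hM : 1 ≤ M) (U : Fin D → Fin D → Fin D → Fin D → ℝ)
    (hU : ∀ i j p q, U i j p q = U i j q p) :
    (1 / (M : ℝ)) * ((1 / (M : ℝ)) * ∑ k : Fin M, ∑ l : Fin M, ∑ i, ∑ j, ∑ p, ∑ q,
      ((if i = j then if p = q then 1 else 0 else 0)
      + if k = l then (if i ≠ j then (if i = p then if j = q then 1 else 0 else 0)
          + (if i = q then if j = p then 1 else 0 else 0) else 0) else 0) * U i j p q)
    = (∑ i, ∑ j, U i i j j) + (2 / (M : ℝ)) * ∑ i, ∑ j, if i ≠ j then U i j i j else 0 := by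
  have hM' : (M : ℝ) ≠ 0 := by positivity
  have h1 : ∀ k l : Fin M, (∑ i, ∑ j, ∑ p, ∑ q,
      ((if i = j then if p = q then 1 else 0 else 0)
      + if k = l then (if i ≠ j then (if i = p then if j = q then 1 else 0 else 0)
          + (if i = q then if j = p then 1 else 0 else 0) else 0) else 0) * U i j p q)
      = (∑ i, ∑ j, U i i j j) + if k = l then 2 * ∑ i, ∑ j, (if i ≠ j then U i j i j else 0)
        else 0 := by
    intro k l
    simp only [add_mul, Finset.sum_add_distrib]
    congr 1
    · refine Finset.sum_congr rfl fun i _ => ?_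
      simp only [ite_mul, zero_mul, one_mul, Finset.sum_ite_irrel, Finset.sum_const_zero,
        Finset.sum_ite_eq, Finset.mem_univ, if_true]
    · split_ifs with hkl
      · simp only [Finset.mul_sum]
        refine Finset.sum_congr rfl fun i _ => Finset.sum_congr rfl fun j _ => ?_
        split_ifs with hij
        · simp only [add_mul, Finset.sum_add_distrib, ite_mul, zero_mul, one_mul,
            Finset.sum_ite_irrel, Finset.sum_const_zero,
            Finset.sum_ite_eq, Finset.mem_univ, if_true]
          rw [hU i j j i]; ring
        · simp
      · simp
  simp only [h1, Finset.sum_add_distrib, Finset.sum_const, Finset.card_univ, Fintype.card_fin,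
    Finset.sum_ite_eq, Finset.mem_univ, if_true, nsmul_eq_mul]
  field_simp

end Helpers

/-- **Lemma B.6 of the paper (Rademacher case).** If `p_v` is the multivariate Rademacher
distribution (uniform on `{±1}^D`), the covariance of `∇_θ f(θ*; x, v_1^M)` equals
`Σ_{ij} V_{ij} + (2/M) Σ_{i≠j} W_{ij}`. -/
theorem variance_of_sliced_gradient_rademacher
    (D K M : ℕ) (hD : 1 ≤ D) (hM : 1 ≤ M)
    (pd : (Fin D → ℝ) → ℝ)
    (pm : EuclideanSpace ℝ (Fin K) → (Fin D → ℝ) → ℝ)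
    (θstar : EuclideanSpace ℝ (Fin K))
    (μd μv : Measure (Fin D → ℝ)) [IsProbabilityMeasure μd] [IsProbabilityMeasure μv]
    -- data density: positive, differentiable; μd is the data distribution
    (hpd_pos : ∀ x, 0 < pd x) (hpd_diff : Differentiable ℝ pd)
    (hμd : μd = volume.withDensity (fun x => ENNReal.ofReal (pd x)))
    -- p_v is the multivariate Rademacher distribution, uniform on {±1}^D
    (hμv : μv = Measure.map (fun s : Fin D → Bool => fun i => if s i then (1 : ℝ) else -1)
      (PMF.uniformOfFintype (Fin D → Bool)).toMeasure)
    -- model densities: positive, with all relevant derivatives existing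
    (hpm_pos : ∀ θ x, 0 < pm θ x)
    (hsmooth : ContDiff ℝ (⊤ : ℕ∞)
      (fun p : EuclideanSpace ℝ (Fin K) × (Fin D → ℝ) => Real.log (pm p.1 p.2)))
    -- well-specified: p_d = p_m(·; θ*)
    (hws : pd = pm θstar)
    -- all expectations below are finite
    (hg_int : ∀ a : Fin K,
      Integrable (fun z : (Fin D → ℝ) × (Fin M → Fin D → ℝ) => gradF pm θstar z.1 z.2 a)
        (μd.prod (Measure.pi fun _ : Fin M => μv)))
    (hgg_int : ∀ a b : Fin K,
      Integrable (fun z : (Fin D → ℝ) × (Fin M → Fin D → ℝ) =>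
          gradF pm θstar z.1 z.2 a * gradF pm θstar z.1 z.2 b)
        (μd.prod (Measure.pi fun _ : Fin M => μv)))
    (huu_int : ∀ (i j p q : Fin D) (a b : Fin K),
      Integrable (fun x => uVec pm θstar i j x a * uVec pm θstar p q x b) μd)
    -- the assumptions of Theorem 1 hold, so the gradient has zero mean at θ*
    (hmean : ∀ a : Fin K,
      ∫ z : (Fin D → ℝ) × (Fin M → Fin D → ℝ), gradF pm θstar z.1 z.2 a
        ∂(μd.prod (Measure.pi fun _ : Fin M => μv)) = 0) :
    ∀ a b : Fin K,
      (∫ z : (Fin D → ℝ) × (Fin M → Fin D → ℝ),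
          gradF pm θstar z.1 z.2 a * gradF pm θstar z.1 z.2 b
          ∂(μd.prod (Measure.pi fun _ : Fin M => μv)))
        - (∫ z : (Fin D → ℝ) × (Fin M → Fin D → ℝ), gradF pm θstar z.1 z.2 a
            ∂(μd.prod (Measure.pi fun _ : Fin M => μv)))
          * (∫ z : (Fin D → ℝ) × (Fin M → Fin D → ℝ), gradF pm θstar z.1 z.2 b
              ∂(μd.prod (Measure.pi fun _ : Fin M => μv)))
      = (∑ i, ∑ j, ∫ x, uVec pm θstar i i x a * uVec pm θstar j j x b ∂μd)
        + (2 / (M : ℝ)) * (∑ i, ∑ j, if i ≠ j then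
            ∫ x, uVec pm θstar i j x a * uVec pm θstar i j x b ∂μd else 0) := by
  intro a b
  have hr : μv = radm D := hμv
  subst hr
  rw [hmean a, zero_mul, sub_zero]
  have e : (fun z : (Fin D → ℝ) × (Fin M → Fin D → ℝ) =>
      gradF pm θstar z.1 z.2 a * gradF pm θstar z.1 z.2 b) = fun z =>
      (1 / (M : ℝ)) * ((1 / (M : ℝ)) * ∑ k : Fin M, ∑ l : Fin M, ∑ i, ∑ j, ∑ p, ∑ q,
        (uVec pm θstar i j z.1 a * uVec pm θstar p q z.1 b)
          * ((z.2 k i * z.2 k j) * (z.2 l p * z.2 l q))) := by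
    funext z
    rw [aux_gradF pm hsmooth, aux_gradF pm hsmooth, mul_mul_mul_comm, mul_assoc,
      Finset.sum_mul_sum]
    congr 2
    refine Finset.sum_congr rfl fun k _ => Finset.sum_congr rfl fun l _ => ?_
    rw [Finset.sum_mul]
    refine Finset.sum_congr rfl fun i _ => ?_
    rw [Finset.sum_mul]
    refine Finset.sum_congr rfl fun j _ => ?_
    rw [Finset.mul_sum]
    refine Finset.sum_congr rfl fun p _ => ?_
    rw [Finset.mul_sum]
    refine Finset.sum_congr rfl fun q _ => ?_
    ring
  have hI : ∀ (k l : Fin M) (i j p q : Fin D), Integrable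
      (fun z : (Fin D → ℝ) × (Fin M → Fin D → ℝ) =>
        (uVec pm θstar i j z.1 a * uVec pm θstar p q z.1 b)
          * ((z.2 k i * z.2 k j) * (z.2 l p * z.2 l q)))
      (μd.prod (Measure.pi fun _ : Fin M => radm D)) := fun k l i j p q =>
    (huu_int i j p q a b).mul_prod (pi_mom k l i j p q).1
  rw [e, integral_const_mul, integral_const_mul]
  rw [← aux_alg hM (fun i j p q => ∫ x, uVec pm θstar i j x a * uVec pm θstar p q x b ∂μd)
    (fun i j p q => by simp_rw [aux_uVec_symm pm hsmooth θstar _ p q])]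
  congr 2
  rw [integral_finsetSum _ fun k _ => integrable_finsetSum _ fun l _ =>
    integrable_finsetSum _ fun i _ => integrable_finsetSum _ fun j _ =>
    integrable_finsetSum _ fun p _ => integrable_finsetSum _ fun q _ => hI k l i j p q]
  refine Finset.sum_congr rfl fun k _ => ?_
  rw [integral_finsetSum _ fun l _ =>
    integrable_finsetSum _ fun i _ => integrable_finsetSum _ fun j _ =>
    integrable_finsetSum _ fun p _ => integrable_finsetSum _ fun q _ => hI k l i j p q]
  refine Finset.sum_congr rfl fun l _ => ?_
  rw [integral_finsetSum _ fun i _ => integrable_finsetSum _ fun j _ =>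
    integrable_finsetSum _ fun p _ => integrable_finsetSum _ fun q _ => hI k l i j p q]
  refine Finset.sum_congr rfl fun i _ => ?_
  rw [integral_finsetSum _ fun j _ =>
    integrable_finsetSum _ fun p _ => integrable_finsetSum _ fun q _ => hI k l i j p q]
  refine Finset.sum_congr rfl fun j _ => ?_
  rw [integral_finsetSum _ fun p _ => integrable_finsetSum _ fun q _ => hI k l i j p q]
  refine Finset.sum_congr rfl fun p _ => ?_
  rw [integral_finsetSum _ fun q _ => hI k l i j p q]
  refine Finset.sum_congr rfl fun q _ => ?_
  rw [← (pi_mom k l i j p q).2, mul_comm]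
  exact integral_prod_mul (fun x => uVec pm θstar i j x a * uVec pm θstar p q x b)
    (fun vs : Fin M → Fin D → ℝ => (vs k i * vs k j) * (vs l p * vs l q))
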